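/- arXiv:1305.1556 — 3 statements merged into one kernel-verified Lean document; each statement's English description precedes it below -/
import Mathlib

section
/- Let R be a commutative ring, I an ideal of R, and N an R-module. The ideal transform D_I(N) = colim_n Hom_R(Iⁿ, N) satisfies Γ_I(D_I(N)) = 0, i.e., D_I(N) has no nonzero I-torsion elements. -/
/-!
An `I`-torsion element `y` of `D_I(N)` is represented by some `g : Iⁿ → N`. Each `a ∈ Iᵏ` kills the
restriction of `g` to a power of `I` that may depend on `a`; because `Iᵏ` is finitely generated,
one power `Iᵐ` serves for all of them. Then `g` vanishes on `Iᵏ · Iᵐ = Iᵏ⁺ᵐ`, and the restriction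
to `Iᵏ⁺ᵐ` represents `y` too.
-/

open Submodule

variable {R : Type*} [CommRing R] {M : Type*} [AddCommGroup M] [Module R M]

/-- A submodule `N` of `M` is *prime* if `N ≠ M` and whenever `r • m ∈ N`,
either `r ∈ (N :ᵣ M)` or `m ∈ N`. Here `(N :ᵣ M)` is `N.colon ⊤`. -/
def IsPrimeSubmodule (N : Submodule R M) : Prop :=
  N ≠ ⊤ ∧ ∀ (r : R) (m : M), r • m ∈ N → r ∈ N.colon ⊤ ∨ m ∈ N

/-- The prime spectrum of the module `M`: the set of prime submodules. -/
def MSpec (R M : Type*) [CommRing R] [AddCommGroup M] [Module R M] :=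
  {P : Submodule R M // IsPrimeSubmodule P}

/-- `V(N) = {P ∈ Spec(M) | (N : M) ⊆ (P : M)}`. -/
def VV (N : Submodule R M) : Set (MSpec R M) :=
  {P | N.colon ⊤ ≤ P.1.colon ⊤}

/-- The basic open set `X_r = Spec(M) \ V(rM)`. -/
def Xb (r : R) : Set (MSpec R M) :=
  (VV (Ideal.span {r} • (⊤ : Submodule R M)))ᶜ


/-- The `I`-torsion elements of an `R`-module `N`:
`Γ_I(N) = ⋃_{n ≥ 1} {x ∈ N | Iⁿ • x = 0}`. -/
def GammaSet (I : Ideal R) {N : Type*} [AddCommGroup N] [Module R N] : Set N :=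
  {x | ∃ n : ℕ, 1 ≤ n ∧ ∀ a ∈ I ^ n, a • x = 0}

/-- The component modules `Hom_R(Iⁿ, N)` of the ideal transform system. -/
abbrev TransGrp (I : Ideal R) (N : Type*) [AddCommGroup N] [Module R N] (n : ℕ) :=
  (I ^ n : Ideal R) →ₗ[R] N

/-- The transition maps of the ideal transform system, induced by restriction along
`Iᵐ ⊆ Iⁿ` for `n ≤ m`. -/
def transMap (I : Ideal R) (N : Type*) [AddCommGroup N] [Module R N] :
    ∀ n m : ℕ, n ≤ m → TransGrp I N n →ₗ[R] TransGrp I N m := fun _ _ h =>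
  LinearMap.lcomp R N (Submodule.inclusion (Ideal.pow_le_pow_right h))

/-- The ideal transform `D_I(N) = colim_n Hom_R(Iⁿ, N)`. -/
def IdealTransform (I : Ideal R) (N : Type*) [AddCommGroup N] [Module R N] :=
  Module.DirectLimit (TransGrp I N) (transMap I N)

noncomputable instance (I : Ideal R) (N : Type*) [AddCommGroup N] [Module R N] :
    AddCommGroup (IdealTransform I N) :=
  inferInstanceAs (AddCommGroup (Module.DirectLimit _ _))

noncomputable instance (I : Ideal R) (N : Type*) [AddCommGroup N] [Module R N] :
    Module R (IdealTransform I N) :=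
  inferInstanceAs (Module R (Module.DirectLimit _ _))

section DirectLimit

variable {ι : Type*} [Preorder ι] [DecidableEq ι] [IsDirectedOrder ι]
  {G : ι → Type*} [∀ i, AddCommGroup (G i)] [∀ i, Module R (G i)]
  {f : ∀ i j, i ≤ j → G i →ₗ[R] G j} [DirectedSystem G (f · · ·)]

theorem exists_le_ker_of_fg_of_le_ker_directLimit_of {i : ι} {P : Submodule R (G i)} (hP : P.FG)
    (hle : P ≤ LinearMap.ker (Module.DirectLimit.of R ι G f i)) :
    ∃ j, ∃ hij : i ≤ j, P ≤ LinearMap.ker (f i j hij) := by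
  induction P, hP using Submodule.fg_induction with
  | singleton x =>
    obtain ⟨j, hij, hx⟩ := Module.DirectLimit.of.zero_exact (hle (mem_span_singleton_self x))
    exact ⟨j, hij, (span_singleton_le_iff_mem _ _).2 hx⟩
  | sup P Q _ _ ihP ihQ =>
    obtain ⟨j, hij, hPj⟩ := ihP (le_sup_left.trans hle)
    obtain ⟨k, hik, hQk⟩ := ihQ (le_sup_right.trans hle)
    obtain ⟨l, hjl, hkl⟩ := exists_ge_ge j k
    refine ⟨l, hij.trans hjl, sup_le (fun x hx => ?_) fun x hx => ?_⟩
    · rw [LinearMap.mem_ker, ← DirectedSystem.map_map' f hij hjl, hPj hx, map_zero]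
    · rw [LinearMap.mem_ker, ← DirectedSystem.map_map' f hik hkl, hQk hx, map_zero]

theorem exists_forall_smul_eq_zero_of_fg_of_smul_directLimit_of_eq_zero {J : Ideal R} (hJ : J.FG)
    {i : ι} {x : G i} (hx : ∀ a ∈ J, a • Module.DirectLimit.of R ι G f i x = 0) :
    ∃ j, ∃ hij : i ≤ j, ∀ a ∈ J, a • f i j hij x = 0 := by
  have hle : Submodule.map (LinearMap.toSpanSingleton R (G i) x) J ≤
      LinearMap.ker (Module.DirectLimit.of R ι G f i) :=
    map_le_iff_le_comap.2 fun a ha => by simpa using hx a ha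
  obtain ⟨j, hij, hj⟩ := exists_le_ker_of_fg_of_le_ker_directLimit_of (FG.map _ hJ) hle
  exact ⟨j, hij, fun a ha => by simpa using hj (mem_map_of_mem ha)⟩

end DirectLimit

theorem smul_top_le_ker_of_forall_smul_eq_zero {N : Type*} [AddCommGroup N] [Module R N]
    {J : Ideal R} {g : M →ₗ[R] N} (hg : ∀ a ∈ J, a • g = 0) :
    J • (⊤ : Submodule R M) ≤ LinearMap.ker g :=
  smul_le.2 fun a ha x _ => by
    rw [LinearMap.mem_ker, map_smul, ← LinearMap.smul_apply, hg a ha, LinearMap.zero_apply]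

section IdealTransform

variable {I : Ideal R} {N : Type*} [AddCommGroup N] [Module R N]

instance transMap_directedSystem : DirectedSystem (TransGrp I N) (transMap I N · · ·) where
  map_self _ _ := rfl
  map_map _ _ _ _ _ _ := rfl

theorem transMap_eq_zero_of_forall_smul_eq_zero {k n : ℕ} {g : TransGrp I N n}
    (hg : ∀ a ∈ I ^ k, a • g = 0) : transMap I N n (k + n) (Nat.le_add_left n k) g = 0 := by
  ext ⟨z, hz⟩
  refine smul_top_le_ker_of_forall_smul_eq_zero hg ((mem_smul_top_iff _ _ _).2 ?_)
  rwa [smul_eq_mul, ← pow_add]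

theorem gamma_idealTransform_eq_zero_general (hI : I.FG) :
    ∀ y : IdealTransform I N, y ∈ GammaSet I → y = 0 := by
  rintro y ⟨k, -, hk⟩
  obtain ⟨n, g, rfl⟩ := Module.DirectLimit.exists_of y
  obtain ⟨m, hnm, hm⟩ :=
    exists_forall_smul_eq_zero_of_fg_of_smul_directLimit_of_eq_zero (hI.pow (n := k)) hk
  calc Module.DirectLimit.of R ℕ (TransGrp I N) (transMap I N) n g
      = Module.DirectLimit.of R ℕ _ (transMap I N) (k + m)
          (transMap I N m (k + m) (Nat.le_add_left m k) (transMap I N n m hnm g)) := by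
        rw [Module.DirectLimit.of_f, Module.DirectLimit.of_f]
    _ = 0 := by rw [transMap_eq_zero_of_forall_smul_eq_zero hm, map_zero]

end IdealTransform

/-- The ideal transform has no nonzero `I`-torsion: `Γ_I(D_I(N)) = 0`. -/
theorem gamma_idealTransform_eq_zero [IsNoetherianRing R] (I : Ideal R)
    {N : Type*} [AddCommGroup N] [Module R N] :
    ∀ y : IdealTransform I N, y ∈ GammaSet I → y = 0 :=
  gamma_idealTransform_eq_zero_general I.fg_of_isNoetherianRing
end

section
/- Let R be a Noetherian ring, I an ideal of R, and N an R-module. If I contains an N-regular sequence of length 2 (elements a, b ∈ I with a a nonzerodivisor on N and b a nonzerodivisor on N/aN, and N/(aN + bN) ≠ 0), then the natural map N → D_I(N) = colim_n Hom_R(Iⁿ, N) is an isomorphism. -/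
open Submodule

variable {R : Type*} [CommRing R] {M : Type*} [AddCommGroup M] [Module R M]

/-!
For an ideal `J` containing a weakly `N`-regular pair `a, b`, every homomorphism `f : J → N` is
multiplication by an element of `N`: since `b • f a = a • f b`, regularity of `b` on `N / aN` gives
`f a = a • x`, and cancelling `a` in `a • f r = r • f a = a • (r • x)` gives `f r = r • x`. If
`a, b ∈ I`, this applies to every `Iⁿ` with the pair `aⁿ, bⁿ`, so that the system defining `D_I(N)`
is isomorphic to the constant system `N`.
-/

section RegularPairs

open RingTheory.Sequence

variable {N : Type*} [AddCommGroup N] [Module R N] {a a' b : R}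

theorem isSMulRegular_quotSMulTop_iff :
    IsSMulRegular (QuotSMulTop a N) b ↔ ∀ x y : N, b • x = a • y → ∃ z, x = a • z := by
  simp only [isSMulRegular_quotient_iff_mem_of_smul_mem, mem_smul_pointwise_iff_exists, mem_top,
    true_and, forall_exists_index, eq_comm]

theorem isSMulRegular_quotSMulTop_mul (ha : IsSMulRegular N a)
    (hb : IsSMulRegular (QuotSMulTop a N) b) (hb' : IsSMulRegular (QuotSMulTop a' N) b) :
    IsSMulRegular (QuotSMulTop (a * a') N) b := by
  rw [isSMulRegular_quotSMulTop_iff] at hb hb' ⊢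
  intro x y hxy
  rw [mul_smul] at hxy
  obtain ⟨z, rfl⟩ := hb x (a' • y) hxy
  have hzy : b • z = a' • y := ha (by simpa only [smul_comm b a z] using hxy)
  obtain ⟨w, rfl⟩ := hb' z y hzy
  exact ⟨w, (mul_smul a a' w).symm⟩

theorem isSMulRegular_quotSMulTop_pow (ha : IsSMulRegular N a)
    (hb : IsSMulRegular (QuotSMulTop a N) b) (n : ℕ) :
    IsSMulRegular (QuotSMulTop (a ^ n) N) b := by
  induction n with
  | zero => exact isSMulRegular_quotSMulTop_iff.mpr fun x _ _ => ⟨x, by simp⟩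
  | succ n ih =>
    rw [pow_succ']
    exact isSMulRegular_quotSMulTop_mul ha hb ih

theorem isWeaklyRegular_pair_iff :
    IsWeaklyRegular N [a, b] ↔ IsSMulRegular N a ∧ IsSMulRegular (QuotSMulTop a N) b := by
  rw [isWeaklyRegular_cons_iff, isWeaklyRegular_singleton_iff]

theorem isWeaklyRegular_pair_pow (h : IsWeaklyRegular N [a, b]) (m n : ℕ) :
    IsWeaklyRegular N [a ^ m, b ^ n] := by
  obtain ⟨ha, hb⟩ := isWeaklyRegular_pair_iff.mp h
  exact isWeaklyRegular_pair_iff.mpr ⟨ha.pow m, (isSMulRegular_quotSMulTop_pow ha hb m).pow n⟩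

end RegularPairs

section SmulHom

open RingTheory.Sequence

variable (J : Ideal R) (N : Type*) [AddCommGroup N] [Module R N]

/-- The natural map `N → Hom_R(J, N)` for an ideal `J`, sending `x` to multiplication
`r ↦ r • x`. -/
def smulHom : N →ₗ[R] J →ₗ[R] N :=
  LinearMap.lcomp R N J.subtype ∘ₗ (LinearMap.lsmul R N).flip

variable {J N}

theorem coe_smul_apply_comm (f : J →ₗ[R] N) (r s : J) : (r : R) • f s = (s : R) • f r := by
  rw [← map_smul, ← map_smul]
  exact congrArg f (Subtype.ext (mul_comm (r : R) s))

theorem smulHom_injective {a : R} (haJ : a ∈ J) (ha : IsSMulRegular N a) :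
    Function.Injective (smulHom J N) :=
  fun _ _ hxy => ha (LinearMap.congr_fun hxy ⟨a, haJ⟩)

theorem smulHom_surjective {a b : R} (haJ : a ∈ J) (hbJ : b ∈ J)
    (h : IsWeaklyRegular N [a, b]) : Function.Surjective (smulHom J N) := by
  intro f
  obtain ⟨ha, hb⟩ := isWeaklyRegular_pair_iff.mp h
  obtain ⟨x, hx⟩ : ∃ x, f ⟨a, haJ⟩ = a • x :=
    isSMulRegular_quotSMulTop_iff.mp hb _ _ (coe_smul_apply_comm f ⟨b, hbJ⟩ ⟨a, haJ⟩)
  refine ⟨x, LinearMap.ext fun r => ha ?_⟩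
  calc
    a • (r : R) • x = (r : R) • f ⟨a, haJ⟩ := by rw [hx, smul_comm]
    _ = a • f r := coe_smul_apply_comm f r ⟨a, haJ⟩

theorem smulHom_bijective {a b : R} (haJ : a ∈ J) (hbJ : b ∈ J)
    (h : IsWeaklyRegular N [a, b]) : Function.Bijective (smulHom J N) :=
  ⟨smulHom_injective haJ (isWeaklyRegular_pair_iff.mp h).1, smulHom_surjective haJ hbJ h⟩

end SmulHom

section IdealTransform

open RingTheory.Sequence

variable (I : Ideal R) (N : Type*) [AddCommGroup N] [Module R N]

instance directedSystem_transMap : DirectedSystem (TransGrp I N) (transMap I N · · ·) where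
  map_self _ _ := rfl
  map_map _ _ _ _ _ _ := rfl

/-- The natural map `N → D_I(N)`, sending `x` to the class of multiplication `r ↦ r • x` on
`I ^ 0`. -/
noncomputable def toIdealTransform : N →ₗ[R] IdealTransform I N :=
  Module.DirectLimit.of R ℕ (TransGrp I N) (transMap I N) 0 ∘ₗ smulHom (I ^ 0) N

variable {I N}

theorem of_smulHom (n : ℕ) (x : N) :
    Module.DirectLimit.of R ℕ (TransGrp I N) (transMap I N) n (smulHom (I ^ n) N x) =
      toIdealTransform I N x :=
  Module.DirectLimit.of_f (f := transMap I N) (hij := n.zero_le) (x := smulHom (I ^ 0) N x)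

theorem toIdealTransform_injective_of_smulHom
    (h : ∀ n, Function.Injective (smulHom (I ^ n) N)) :
    Function.Injective (toIdealTransform I N) := by
  rw [injective_iff_map_eq_zero]
  intro x hx
  obtain ⟨n, _, hn⟩ := Module.DirectLimit.of.zero_exact hx
  exact (injective_iff_map_eq_zero _).mp (h n) x hn

theorem toIdealTransform_surjective_of_smulHom
    (h : ∀ n, Function.Surjective (smulHom (I ^ n) N)) :
    Function.Surjective (toIdealTransform I N) := by
  intro z
  obtain ⟨n, f, rfl⟩ := Module.DirectLimit.exists_of z
  obtain ⟨x, rfl⟩ := h n f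
  exact ⟨x, (of_smulHom n x).symm⟩

theorem toIdealTransform_bijective_general {a b : R} (ha : a ∈ I) (hb : b ∈ I)
    (h : IsWeaklyRegular N [a, b]) : Function.Bijective (toIdealTransform I N) := by
  have smulHom_pow_bijective (n : ℕ) : Function.Bijective (smulHom (I ^ n) N) :=
    smulHom_bijective (Ideal.pow_mem_pow ha n) (Ideal.pow_mem_pow hb n)
      (isWeaklyRegular_pair_pow h n n)
  exact ⟨toIdealTransform_injective_of_smulHom fun n => (smulHom_pow_bijective n).injective,
    toIdealTransform_surjective_of_smulHom fun n => (smulHom_pow_bijective n).surjective⟩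

end IdealTransform

/-- If `I` contains an `N`-regular sequence `a, b` of length 2, then the natural map
`N → D_I(N)`, `x ↦ (r ↦ r • x)`, is an isomorphism. -/
theorem toIdealTransform_bijective [IsNoetherianRing R] (I : Ideal R)
    {N : Type*} [AddCommGroup N] [Module R N] (a b : R) (ha : a ∈ I) (hb : b ∈ I)
    (hareg : ∀ x : N, a • x = 0 → x = 0)
    (hbreg : ∀ y : N ⧸ (Ideal.span {a} • (⊤ : Submodule R N)), b • y = 0 → y = 0)
    (hproper : (Ideal.span {a} • (⊤ : Submodule R N)) ⊔
      (Ideal.span {b} • (⊤ : Submodule R N)) ≠ ⊤) :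
    Function.Bijective (fun x : N =>
      Module.DirectLimit.of R ℕ (TransGrp I N) (transMap I N) 0
        ((LinearMap.toSpanSingleton R N x).comp (Submodule.subtype (I ^ 0)))) := by
  rw [← isSMulRegular_iff_right_eq_zero_of_smul] at hareg hbreg
  rw [ideal_span_singleton_smul] at hbreg
  exact toIdealTransform_bijective_general ha hb (isWeaklyRegular_pair_iff.mpr ⟨hareg, hbreg⟩)
end

section
/- Let R be a PID, a ∈ R a nonzero element, I = (a), and N an R-module. Then the ideal transform D_I(N) = colim_n Hom_R(Iⁿ, N) is isomorphic to the localization N_a of N at the multiplicative set {1, a, a², …}. -/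
open Submodule

variable {R : Type*} [CommRing R] {M : Type*} [AddCommGroup M] [Module R M]

/-!
The ideal `(a)ⁿ` is generated by `aⁿ`, so a map `φ : (a)ⁿ → N` is determined by `φ(aⁿ)`, and
restricting `φ` to `(a)ᵐ` multiplies this value by `aᵐ⁻ⁿ`. Hence the fractions `φ(aⁿ)/aⁿ` are
compatible and define a map `D_I(N) → N_a`. If `φ(aⁿ)/aⁿ = 0`, then some `aᵏ` kills `φ(aⁿ)`, so `φ`
restricts to zero on `(a)ⁿ⁺ᵏ`; this gives injectivity. An element `x` is a value `φ(aⁿ)` as soon as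
the annihilator of `aⁿ` kills `x`. Once `aᵐ` kills the `a`-power torsion of `R`, this applies to
`aᵐx`, and `x/aⁿ = aᵐx/aᵐ⁺ⁿ` is in the image.
-/

namespace IdealTransform

/-- The generator `aⁿ` of `(a)ⁿ`, bundled as an element of that ideal. A homomorphism out of `(a)ⁿ`
is studied through its value here. -/
def powGenerator (a : R) (n : ℕ) : (Ideal.span {a} ^ n : Ideal R) :=
  ⟨a ^ n, Ideal.pow_mem_pow (Ideal.mem_span_singleton_self a) n⟩

lemma exists_smul_powGenerator_eq (a : R) (n : ℕ) (y : (Ideal.span {a} ^ n : Ideal R)) :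
    ∃ c : R, c • powGenerator a n = y := by
  obtain ⟨y, hy⟩ := y
  rw [Ideal.span_singleton_pow, Ideal.mem_span_singleton'] at hy
  exact hy.imp fun c hc ↦ Subtype.ext hc

section TransitionMaps

variable {N : Type*} [AddCommGroup N] [Module R N] {a : R} {n : ℕ}

lemma eq_zero_of_apply_powGenerator_eq_zero {φ : TransGrp (Ideal.span {a}) N n}
    (h : φ (powGenerator a n) = 0) : φ = 0 := by
  ext y
  obtain ⟨c, rfl⟩ := exists_smul_powGenerator_eq a n y
  rw [map_smul, h, smul_zero, LinearMap.zero_apply]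

lemma exists_apply_powGenerator_eq {x : N} (hx : ∀ r ∈ torsionBy R R (a ^ n), r • x = 0) :
    ∃ φ : TransGrp (Ideal.span {a}) N n, φ (powGenerator a n) = x := by
  have hx' (r : R) (hr : r • a ^ n = 0) : r • x = 0 :=
    hx r ((mul_comm (a ^ n) r).trans hr)
  let φ := LinearPMap.mkSpanSingleton' (σ := RingHom.id R) (a ^ n) x hx'
  exact ⟨φ.toFun ∘ₗ inclusion (Ideal.span_singleton_pow a n).le,
    LinearPMap.mkSpanSingleton'_apply_self (σ := RingHom.id R) (a ^ n) x hx' _⟩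

lemma transMap_apply_powGenerator (k : ℕ) (φ : TransGrp (Ideal.span {a}) N n) :
    transMap (Ideal.span {a}) N n (n + k) (Nat.le_add_right n k) φ (powGenerator a (n + k)) =
      a ^ k • φ (powGenerator a n) := by
  have h_incl : inclusion (Ideal.pow_le_pow_right (Nat.le_add_right n k)) (powGenerator a (n + k)) =
      a ^ k • powGenerator a n :=
    Subtype.ext ((pow_add a n k).trans (mul_comm _ _))
  exact (congrArg φ h_incl).trans (map_smul φ _ _)

end TransitionMaps

section Comparison

variable {N N' : Type*} [AddCommGroup N] [Module R N] [AddCommGroup N'] [Module R N']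
  (a : R) (f : N →ₗ[R] N') [IsLocalizedModule (Submonoid.powers a) f]

/-- The map `Hom_R((a)ⁿ, N) → N_a`, `φ ↦ φ(aⁿ)/aⁿ`: the component at `n` of the comparison map out
of the ideal transform. The localization is any `f : N → N'` with the universal property. -/
noncomputable def evalDivPow (n : ℕ) : TransGrp (Ideal.span {a}) N n →ₗ[R] N' where
  toFun φ := IsLocalizedModule.mk' f (φ (powGenerator a n)) (Submonoid.pow a n)
  map_add' _ _ := IsLocalizedModule.mk'_add f _ _ _
  map_smul' _ _ := IsLocalizedModule.mk'_smul f _ _ _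

lemma evalDivPow_apply (n : ℕ) (φ : TransGrp (Ideal.span {a}) N n) :
    evalDivPow a f n φ =
      IsLocalizedModule.mk' f (φ (powGenerator a n)) (Submonoid.pow a n) :=
  rfl

lemma mk'_pow_smul (n k : ℕ) (x : N) :
    IsLocalizedModule.mk' f (a ^ k • x) (Submonoid.pow a (n + k)) =
      IsLocalizedModule.mk' f x (Submonoid.pow a n) := by
  have h_pow : Submonoid.pow a (n + k) = Submonoid.pow a n * Submonoid.pow a k :=
    Subtype.ext (pow_add a n k)
  rw [h_pow]
  exact IsLocalizedModule.mk'_cancel_right f x _ (Submonoid.pow a k)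

lemma evalDivPow_transMap (n m : ℕ) (h : n ≤ m) (φ : TransGrp (Ideal.span {a}) N n) :
    evalDivPow a f m (transMap (Ideal.span {a}) N n m h φ) = evalDivPow a f n φ := by
  obtain ⟨k, rfl⟩ := Nat.exists_eq_add_of_le h
  rw [evalDivPow_apply, transMap_apply_powGenerator, mk'_pow_smul, evalDivPow_apply]

/-- The comparison map `D_(a)(N) → N_a`, induced on the colimit by the maps `φ ↦ φ(aⁿ)/aⁿ`. -/
noncomputable def toLocalizedModule : IdealTransform (Ideal.span {a}) N →ₗ[R] N' :=
  Module.DirectLimit.lift R ℕ _ _ (evalDivPow a f) (evalDivPow_transMap a f)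

lemma toLocalizedModule_of (n : ℕ) (φ : TransGrp (Ideal.span {a}) N n) :
    toLocalizedModule a f (Module.DirectLimit.of R ℕ _ (transMap (Ideal.span {a}) N) n φ) =
      evalDivPow a f n φ :=
  Module.DirectLimit.lift_of _ _ _

lemma toLocalizedModule_injective : Function.Injective (toLocalizedModule a f) := by
  refine (injective_iff_map_eq_zero _).2 fun z hz ↦ ?_
  obtain ⟨n, φ, rfl⟩ := Module.DirectLimit.exists_of z
  rw [toLocalizedModule_of, evalDivPow_apply, IsLocalizedModule.mk'_eq_zero'] at hz
  obtain ⟨⟨_, k, rfl⟩, hk⟩ := hz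
  have h_restrict : transMap (Ideal.span {a}) N n (n + k) (Nat.le_add_right n k) φ = 0 :=
    eq_zero_of_apply_powGenerator_eq_zero ((transMap_apply_powGenerator k φ).trans hk)
  rw [← Module.DirectLimit.of_f (hij := Nat.le_add_right n k), h_restrict]
  exact map_zero _

variable {a}

lemma toLocalizedModule_surjective {m : ℕ}
    (hm : torsion' R R (Submonoid.powers a) ≤ torsionBy R R (a ^ m)) :
    Function.Surjective (toLocalizedModule a f) := by
  intro z
  obtain ⟨⟨x, ⟨_, n, rfl⟩⟩, rfl⟩ := IsLocalizedModule.mk'_surjective (Submonoid.powers a) f z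
  have h_kill (r : R) (hr : r ∈ torsionBy R R (a ^ (n + m))) : r • a ^ m • x = 0 := by
    have hr' : a ^ m * r = 0 := hm ⟨Submonoid.pow a (n + m), hr⟩
    rw [smul_smul, mul_comm, hr', zero_smul]
  obtain ⟨φ, hφ⟩ := exists_apply_powGenerator_eq h_kill
  refine ⟨Module.DirectLimit.of R ℕ _ (transMap (Ideal.span {a}) N) (n + m) φ, ?_⟩
  rw [toLocalizedModule_of, evalDivPow_apply, hφ]
  exact mk'_pow_smul a f n m x

end Comparison

end IdealTransform

lemma torsion'_powers_eq_bot_of_isSMulRegular {N : Type*} [AddCommGroup N] [Module R N] {a : R}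
    (ha : IsSMulRegular N a) : torsion' R N (Submonoid.powers a) = ⊥ := by
  rw [eq_bot_iff]
  rintro x ⟨⟨_, n, rfl⟩, hx⟩
  exact (ha.pow n).right_eq_zero_of_smul hx

/-- `hm` is bounded `a`-power torsion of `R`: it covers non-zero-divisors `a` (with `m = 0`) and all
elements of Noetherian rings. -/
theorem idealTransform_iso_localizedModule_general {N N' : Type*} [AddCommGroup N] [Module R N]
    [AddCommGroup N'] [Module R N'] (a : R) (m : ℕ)
    (hm : torsion' R R (Submonoid.powers a) ≤ torsionBy R R (a ^ m))
    (f : N →ₗ[R] N') [IsLocalizedModule (Submonoid.powers a) f] :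
    Nonempty (IdealTransform (Ideal.span {a}) N ≃ₗ[R] N') :=
  ⟨LinearEquiv.ofBijective (IdealTransform.toLocalizedModule a f)
    ⟨IdealTransform.toLocalizedModule_injective a f,
      IdealTransform.toLocalizedModule_surjective f hm⟩⟩

/-- Over a PID, the ideal transform of `N` at `I = (a)` (`a ≠ 0`) is isomorphic to the
localization `N_a` of `N` at the powers of `a`. -/
theorem idealTransform_iso_localizedModule [IsDomain R] [IsPrincipalIdealRing R]
    (a : R) (ha : a ≠ 0) (N : Type*) [AddCommGroup N] [Module R N] :
    Nonempty (IdealTransform (Ideal.span {a}) N ≃ₗ[R]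
      LocalizedModule (Submonoid.powers a) N) :=
  have h_torsion : torsion' R R (Submonoid.powers a) = ⊥ :=
    torsion'_powers_eq_bot_of_isSMulRegular (IsSMulRegular.of_ne_zero ha)
  idealTransform_iso_localizedModule_general a 0 (h_torsion.trans_le bot_le)
    (LocalizedModule.mkLinearMap (Submonoid.powers a) N)
end
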